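/- For every relational vocabulary ρ and all d, k, ℓ, q ∈ ℕ there exists m ∈ ℕ such that the following holds. Let B be a ρ-structure whose Gaifman graph has maximum degree Δ(B) ≤ d, and let C be the family of all concepts ⟦φ(x̄; v̄)⟧^B ⊆ U(B)^k, where φ(x̄; ȳ) ranges over first-order formulas over ρ of quantifier rank at most q with |x̄| = k and |ȳ| = ℓ, and v̄ ranges over U(B)^ℓ. Then the VC-dimension of C satisfies VC(C) ≤ m; in particular, no subset of U(B)^k of cardinality m+1 is shattered by C. -/

import Mathlib

open FirstOrder FirstOrder.Language

universe w

/-- The quantifier rank of a first-order (bounded) formula: the nesting depth of quantifiers. -/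
def qRank {L : FirstOrder.Language} : ∀ {α : Type*} {n : ℕ}, L.BoundedFormula α n → ℕ
  | _, _, .falsum => 0
  | _, _, .equal _ _ => 0
  | _, _, .rel _ _ => 0
  | _, _, .imp f g => max (qRank f) (qRank g)
  | _, _, .all f => qRank f + 1

/-- Adjacency in the Gaifman graph of a structure: two distinct elements are adjacent iff
they occur together in some tuple of some relation. -/
def gaifmanAdj (L : FirstOrder.Language) (M : Type w) [L.Structure M] (a b : M) : Prop :=
  a ≠ b ∧ ∃ (n : ℕ) (R : L.Relations n) (t : Fin n → M),
    Structure.RelMap R t ∧ (∃ i, t i = a) ∧ (∃ j, t j = b)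

/-- `distLE L M r a b` means the distance between `a` and `b` in the Gaifman graph of `M`
is at most `r`. -/
def distLE (L : FirstOrder.Language) (M : Type w) [L.Structure M] : ℕ → M → M → Prop
  | 0, a, b => a = b
  | r + 1, a, b => a = b ∨ ∃ c, gaifmanAdj L M a c ∧ distLE L M r c b

theorem distLE_self (L : FirstOrder.Language) (M : Type w) [L.Structure M] (r : ℕ) (a : M) :
    distLE L M r a a := by
  cases r with
  | zero => rfl
  | succ r => exact Or.inl rfl

/-- The `r`-neighbourhood of a tuple: all elements at Gaifman distance at most `r`
from some component of the tuple. -/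
def nbhd (L : FirstOrder.Language) (M : Type w) [L.Structure M] (r : ℕ) {k : ℕ}
    (u : Fin k → M) : Set M :=
  {b | ∃ i, distLE L M r (u i) b}

/-- `IsDistFormula L r d` says that the formula `d`, with two free variables, expresses
that the Gaifman distance between its two arguments is at most `r` (this is the property
of the formula `δ_{≤r}`). -/
def IsDistFormula.{v} (L : FirstOrder.Language) (r : ℕ) (d : L.Formula (Fin 2)) : Prop :=
  ∀ (M : Type v) [L.Structure M], ∀ a b : M, d.Realize ![a, b] ↔ distLE L M r a b

/-- The radius-`r` relativisation of a formula with free variables `x_0, …, x_{k-1}`,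
relative to a formula `d = δ_{≤r}` expressing distance at most `r`: every (universal)
quantifier `∀ y ψ` is replaced by `∀ y (⋁_i δ_{≤r}(x_i, y) → ψ)` (and consequently every
existential quantifier `∃ y ψ` by `∃ y (⋁_i δ_{≤r}(x_i, y) ∧ ψ)`). -/
def relativize {L : FirstOrder.Language} (d : L.Formula (Fin 2)) :
    ∀ {k n : ℕ}, L.BoundedFormula (Fin k) n → L.BoundedFormula (Fin k) n
  | _, _, .falsum => .falsum
  | _, _, .equal t₁ t₂ => .equal t₁ t₂
  | _, _, .rel R ts => .rel R ts
  | _, _, .imp f g => (relativize d f).imp (relativize d g)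
  | k, n, .all f =>
      ((((List.finRange k).map fun i =>
          BoundedFormula.relabel (![Sum.inl i, Sum.inr (Fin.last n)] : Fin 2 → (Fin k) ⊕ (Fin (n + 1))) d).foldr
            (· ⊔ ·) ⊥).imp (relativize d f)).all

/-- A formula is syntactically `r`-local (w.r.t. the distance formula `d = δ_{≤r}`) if it is
the radius-`r` relativisation of some formula. -/
def SynLocal {L : FirstOrder.Language} (d : L.Formula (Fin 2)) {k : ℕ}
    (φ : L.Formula (Fin k)) : Prop :=
  ∃ ψ : L.Formula (Fin k), φ = relativize d ψ

/-- The local `(q, r)`-type of a tuple `u` in `M`: the set of syntactically `r`-local formulas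
(w.r.t. the distance formula `d = δ_{≤r}`) of quantifier rank at most `q` satisfied by `u`. -/
def ltp {L : FirstOrder.Language} (d : L.Formula (Fin 2)) (q : ℕ) (M : Type w) [L.Structure M]
    {k : ℕ} (u : Fin k → M) : Set (L.Formula (Fin k)) :=
  {φ | SynLocal d φ ∧ qRank φ ≤ q ∧ φ.Realize u}

/-- The first-order `q`-type of a tuple `u` in `M`: the set of formulas of quantifier rank
at most `q` (with free variables among `x_0, …, x_{k-1}`) satisfied by `u`. -/
def ftp {L : FirstOrder.Language} (q : ℕ) (M : Type w) [L.Structure M]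
    {k : ℕ} (u : Fin k → M) : Set (L.Formula (Fin k)) :=
  {φ | qRank φ ≤ q ∧ φ.Realize u}

/-- The union of two disjoint structures (realized as a structure on the sum type):
a relation holds of a tuple iff the tuple lies entirely in one part and the relation
holds there. -/
def sumStructure (L : FirstOrder.Language) [L.IsRelational] (M N : Type w)
    [L.Structure M] [L.Structure N] : L.Structure (M ⊕ N) where
  funMap f _ := isEmptyElim f
  RelMap R t :=
    (∃ s, t = Sum.inl ∘ s ∧ Structure.RelMap R s) ∨
    (∃ s, t = Sum.inr ∘ s ∧ Structure.RelMap R s)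

/-- The substructure of `M` induced on a subset `S`. -/
def inducedStructure (L : FirstOrder.Language) [L.IsRelational] {M : Type w} [L.Structure M]
    (S : Set M) : L.Structure S where
  funMap f _ := isEmptyElim f
  RelMap R t := Structure.RelMap R fun i => (t i : M)

/-- A formula `φ(x_1, …, x_k)` is `r`-local if for every structure `M` and every tuple `u`,
`M ⊨ φ(u)` iff the substructure induced on the `r`-neighbourhood of `u` satisfies `φ(u)`. -/
def RLocal.{v} (L : FirstOrder.Language) [L.IsRelational] (r : ℕ) {k : ℕ}
    (φ : L.Formula (Fin k)) : Prop :=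
  ∀ (M : Type v) [L.Structure M] (u : Fin k → M),
    φ.Realize u ↔
      (letI := inducedStructure L (nbhd L M r u)
       Formula.Realize (M := nbhd L M r u) φ
         (fun i => ⟨u i, i, distLE_self L M r (u i)⟩))


section LocalIsomorphism

open Set

variable {L : FirstOrder.Language} {B : Type w} [L.Structure B]

theorem gaifmanAdj.symm {a b : B} (h : gaifmanAdj L B a b) : gaifmanAdj L B b a := by
  obtain ⟨hne, n, R, t, hR, ha, hb⟩ := h
  exact ⟨hne.symm, n, R, t, hR, hb, ha⟩

theorem gaifmanAdj.distLE {a b : B} (h : gaifmanAdj L B a b) (r : ℕ) :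
    distLE L B (r + 1) a b :=
  Or.inr ⟨b, h, distLE_self L B r b⟩

theorem distLE.succ {r : ℕ} : ∀ {a b : B}, distLE L B r a b → distLE L B (r + 1) a b := by
  induction r with
  | zero => intro a b h; exact Or.inl h
  | succ r ih =>
    rintro a b (h | ⟨c, hac, h⟩)
    · exact Or.inl h
    · exact Or.inr ⟨c, hac, ih h⟩

theorem distLE.mono {r s : ℕ} (hrs : r ≤ s) {a b : B} (h : distLE L B r a b) :
    distLE L B s a b := by
  induction hrs with
  | refl => exact h
  | step _ ih => exact ih.succ

theorem distLE.trans {r s : ℕ} : ∀ {a b c : B},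
    distLE L B r a b → distLE L B s b c → distLE L B (r + s) a c := by
  induction r with
  | zero => intro a b c h h'; rw [Nat.zero_add]; exact (show a = b from h) ▸ h'
  | succ r ih =>
    rintro a b c (rfl | ⟨d, had, h⟩) h'
    · exact h'.mono (by omega)
    · rw [Nat.add_right_comm]
      exact Or.inr ⟨d, had, ih h h'⟩

theorem distLE.symm {r : ℕ} : ∀ {a b : B}, distLE L B r a b → distLE L B r b a := by
  induction r with
  | zero => intro a b h; exact Eq.symm h
  | succ r ih =>
    rintro a b (rfl | ⟨c, hac, h⟩)
    · exact distLE_self L B _ _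
    · exact (ih h).trans (hac.symm.distLE 0)

variable (L) in
/-- The set of all elements at Gaifman distance at most `r` from the set `A`. -/
def ballAround (r : ℕ) (A : Set B) : Set B :=
  {b | ∃ a ∈ A, distLE L B r a b}

theorem subset_ballAround (r : ℕ) (A : Set B) : A ⊆ ballAround L r A :=
  fun a ha => ⟨a, ha, distLE_self L B r a⟩

theorem ballAround_mono {r s : ℕ} (hrs : r ≤ s) {A C : Set B} (hAC : A ⊆ C) :
    ballAround L r A ⊆ ballAround L s C := by
  rintro b ⟨a, ha, h⟩
  exact ⟨a, hAC ha, h.mono hrs⟩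

theorem ballAround_ballAround_subset (r s : ℕ) (A : Set B) :
    ballAround L s (ballAround L r A) ⊆ ballAround L (r + s) A := by
  rintro c ⟨b, ⟨a, ha, hab⟩, hbc⟩
  exact ⟨a, ha, hab.trans hbc⟩

theorem ballAround_union (r : ℕ) (A C : Set B) :
    ballAround L r (A ∪ C) = ballAround L r A ∪ ballAround L r C := by
  ext b
  simp only [ballAround, mem_union, mem_ofPred_eq]
  constructor
  · rintro ⟨a, ha | ha, h⟩
    exacts [Or.inl ⟨a, ha, h⟩, Or.inr ⟨a, ha, h⟩]
  · rintro (⟨a, ha, h⟩ | ⟨a, ha, h⟩)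
    exacts [⟨a, Or.inl ha, h⟩, ⟨a, Or.inr ha, h⟩]

/-- An upper bound for the size of a ball of radius `r` in a graph of maximum degree `d`. -/
def ballBound (d : ℕ) : ℕ → ℕ
  | 0 => 1
  | r + 1 => d * ballBound d r + 1

theorem ball_finite_and_ncard_le {d : ℕ}
    (hd : ∀ a : B, {b | gaifmanAdj L B a b}.Finite ∧ Set.ncard {b | gaifmanAdj L B a b} ≤ d)
    (r : ℕ) : ∀ a : B, {b | distLE L B r a b}.Finite ∧
      {b | distLE L B r a b}.ncard ≤ ballBound d r := by
  induction r with
  | zero =>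
    intro a
    have h : {b | distLE L B 0 a b} = {a} := by
      ext b; exact eq_comm
    rw [h]
    exact ⟨finite_singleton a, (ncard_singleton a).le⟩
  | succ r ih =>
    intro a
    have h : {b | distLE L B (r + 1) a b} =
        insert a (⋃ c ∈ (hd a).1.toFinset, {b | distLE L B r c b}) := by
      ext b
      simp [distLE, eq_comm]
    have hfin : (⋃ c ∈ (hd a).1.toFinset, {b | distLE L B r c b}).Finite :=
      (hd a).1.toFinset.finite_toSet.biUnion fun c _ => (ih c).1
    rw [h]
    refine ⟨hfin.insert a, (ncard_insert_le _ _).trans (Nat.succ_le_succ ?_)⟩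
    calc _ ≤ ∑ c ∈ (hd a).1.toFinset, {b | distLE L B r c b}.ncard :=
          Finset.set_ncard_biUnion_le _ _
      _ ≤ ∑ _c ∈ (hd a).1.toFinset, ballBound d r := Finset.sum_le_sum fun c _ => (ih c).2
      _ = (hd a).1.toFinset.card * ballBound d r := by simp
      _ ≤ d * ballBound d r := by
          rw [← ncard_eq_toFinset_card _ (hd a).1]
          exact Nat.mul_le_mul_right _ (hd a).2

theorem ballAround_finite_and_ncard_le {d : ℕ}
    (hd : ∀ a : B, {b | gaifmanAdj L B a b}.Finite ∧ Set.ncard {b | gaifmanAdj L B a b} ≤ d)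
    (r : ℕ) {A : Set B} (hA : A.Finite) : (ballAround L r A).Finite ∧
      (ballAround L r A).ncard ≤ A.ncard * ballBound d r := by
  have h : ballAround L r A = ⋃ a ∈ hA.toFinset, {b | distLE L B r a b} := by
    ext b; simp [ballAround]
  rw [h]
  refine ⟨hA.toFinset.finite_toSet.biUnion fun a _ => (ball_finite_and_ncard_le hd r a).1, ?_⟩
  calc _ ≤ ∑ a ∈ hA.toFinset, {b | distLE L B r a b}.ncard := Finset.set_ncard_biUnion_le _ _
    _ ≤ ∑ _a ∈ hA.toFinset, ballBound d r :=
        Finset.sum_le_sum fun a _ => (ball_finite_and_ncard_le hd r a).2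
    _ = A.ncard * ballBound d r := by simp [ncard_eq_toFinset_card _ hA]

variable (L) in
/-- A partial bijection that preserves and reflects all relations on its source. -/
def IsPartialIso (e : PartialEquiv B B) : Prop :=
  ∀ (n : ℕ) (R : L.Relations n) (t : Fin n → B), (∀ i, t i ∈ e.source) →
    (Structure.RelMap R (e ∘ t) ↔ Structure.RelMap R t)

theorem IsPartialIso.symm {e : PartialEquiv B B} (he : IsPartialIso L e) :
    IsPartialIso L e.symm := by
  intro n R t ht
  have h : e ∘ (e.symm ∘ t) = t := funext fun i => e.right_inv (ht i)
  rw [← he n R (e.symm ∘ t) fun i => e.map_target (ht i), h]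

theorem IsPartialIso.gaifmanAdj {e : PartialEquiv B B} (he : IsPartialIso L e) {a b : B}
    (ha : ∀ c, distLE L B 1 a c → c ∈ e.source) (h : gaifmanAdj L B a b) :
    gaifmanAdj L B (e a) (e b) := by
  have hb := ha b (h.distLE 0)
  obtain ⟨hne, n, R, t, hR, ⟨i, rfl⟩, ⟨j, rfl⟩⟩ := h
  refine ⟨fun h => hne (e.injOn (ha _ (distLE_self L B _ _)) hb h), n, R, e ∘ t,
    (he n R t fun l => ?_).2 hR, ⟨i, rfl⟩, ⟨j, rfl⟩⟩
  by_cases hl : t i = t l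
  · exact hl ▸ ha _ (distLE_self L B _ _)
  · exact ha _ (gaifmanAdj.distLE ⟨hl, n, R, t, hR, ⟨i, rfl⟩, ⟨l, rfl⟩⟩ 0)

theorem IsPartialIso.distLE {e : PartialEquiv B B} (he : IsPartialIso L e) {s : ℕ} :
    ∀ {a b : B}, (∀ c, distLE L B s a c → c ∈ e.source) → distLE L B s a b →
      distLE L B s (e a) (e b) := by
  induction s with
  | zero => intro a b _ h; exact congrArg e (show a = b from h)
  | succ s ih =>
    rintro a b ha (rfl | ⟨c, hac, h⟩)
    · exact distLE_self L B _ _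
    · exact Or.inr ⟨e c, he.gaifmanAdj (fun x hx => ha x (hx.mono (by omega))) hac,
        ih (fun x hx => ha x (Or.inr ⟨c, hac, hx⟩)) h⟩

variable (L) in
/-- `e` restricts to an isomorphism between the `r`-neighbourhoods of `A` and of `e '' A`. -/
structure IsLocalIso (r : ℕ) (A : Set B) (e : PartialEquiv B B) : Prop where
  isPartialIso : IsPartialIso L e
  ballAround_subset_source : ballAround L r A ⊆ e.source
  ballAround_subset_target : ballAround L r (e '' A) ⊆ e.target

namespace IsLocalIso

variable {r : ℕ} {A C : Set B} {e e₁ e₂ : PartialEquiv B B}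

theorem refl (r : ℕ) (A : Set B) : IsLocalIso L r A (PartialEquiv.refl B) :=
  ⟨fun _ _ _ _ => Iff.rfl, subset_univ _, subset_univ _⟩

theorem subset_source (h : IsLocalIso L r A e) : A ⊆ e.source :=
  (subset_ballAround r A).trans h.ballAround_subset_source

theorem map_ballAround (h : IsLocalIso L r A e) {s : ℕ} (hs : s ≤ r) {b : B}
    (hb : b ∈ ballAround L s A) : e b ∈ ballAround L s (e '' A) := by
  obtain ⟨a, ha, hab⟩ := hb
  exact ⟨e a, mem_image_of_mem e ha, h.isPartialIso.distLE
    (fun c hc => h.ballAround_subset_source ⟨a, ha, hc.mono hs⟩) hab⟩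

theorem symm_image (h : IsLocalIso L r A e) : e.symm '' (e '' A) = A :=
  e.symm_image_image_of_subset_source h.subset_source

theorem symm (h : IsLocalIso L r A e) : IsLocalIso L r (e '' A) e.symm :=
  ⟨h.isPartialIso.symm, h.ballAround_subset_target, by
    rw [h.symm_image]; exact h.ballAround_subset_source⟩

theorem subset {R ρ : ℕ} (h : IsLocalIso L R A e) (hR : ρ + r ≤ R)
    (hC : C ⊆ ballAround L ρ A) : IsLocalIso L r C e := by
  refine ⟨h.isPartialIso, ?_, ?_⟩
  · exact ((ballAround_mono le_rfl hC).trans (ballAround_ballAround_subset _ _ _)).trans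
      ((ballAround_mono hR Subset.rfl).trans h.ballAround_subset_source)
  · have hC' : e '' C ⊆ ballAround L ρ (e '' A) := by
      rintro _ ⟨c, hc, rfl⟩
      exact h.map_ballAround (by omega) (hC hc)
    exact ((ballAround_mono le_rfl hC').trans (ballAround_ballAround_subset _ _ _)).trans
      ((ballAround_mono hR Subset.rfl).trans h.ballAround_subset_target)

theorem mono (h : IsLocalIso L r A e) (hC : C ⊆ A) : IsLocalIso L r C e :=
  h.subset (ρ := 0) (by omega) (hC.trans (subset_ballAround 0 A))

theorem trans (h₁ : IsLocalIso L r A e₁) (h₂ : IsLocalIso L r (e₁ '' A) e₂) :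
    IsLocalIso L r A (e₁.trans e₂) := by
  refine ⟨fun n R t ht => ?_, fun b hb => ?_, ?_⟩
  · simp only [PartialEquiv.trans_source, mem_inter_iff, mem_preimage] at ht
    rw [PartialEquiv.coe_trans, Function.comp_assoc,
      h₂.isPartialIso n R (e₁ ∘ t) fun i => (ht i).2, h₁.isPartialIso n R t fun i => (ht i).1]
  · rw [PartialEquiv.trans_source]
    exact ⟨h₁.ballAround_subset_source hb,
      h₂.ballAround_subset_source (h₁.map_ballAround le_rfl hb)⟩
  · rw [PartialEquiv.coe_trans, image_comp, PartialEquiv.trans_target]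
    intro b hb
    refine ⟨h₂.ballAround_subset_target hb, h₁.ballAround_subset_target ?_⟩
    have := h₂.symm.map_ballAround le_rfl hb
    rwa [h₂.symm_image] at this

theorem exists_exact (h : IsLocalIso L r A e) : ∃ e' : PartialEquiv B B, IsPartialIso L e' ∧
    e'.source = ballAround L r A ∧ e'.target = ballAround L r (e '' A) ∧ EqOn e' e A := by
  refine ⟨e.restr (ballAround L r A), fun n R t ht => ?_, ?_, ?_, fun a _ => rfl⟩
  · exact h.isPartialIso n R t fun i => (e.restr_source _ ▸ ht i).1
  · rw [e.restr_source]
    exact inter_eq_right.2 h.ballAround_subset_source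
  · rw [e.restr_target]
    ext b
    constructor
    · rintro ⟨hb, hb'⟩
      have := h.map_ballAround le_rfl hb'
      rwa [e.right_inv hb] at this
    · intro hb
      have := h.symm.map_ballAround le_rfl hb
      rw [h.symm_image] at this
      exact ⟨h.ballAround_subset_target hb, this⟩

end IsLocalIso

variable (L) in
/-- All elements of `A` have Gaifman distance greater than `s` from all elements of `C`. -/
def Separated (s : ℕ) (A C : Set B) : Prop :=
  ∀ a ∈ A, ∀ c ∈ C, ¬ distLE L B s a c

theorem Separated.disjoint {r : ℕ} {A C : Set B} (h : Separated L (2 * r + 1) A C) :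
    Disjoint (ballAround L r A) (ballAround L r C) := by
  rw [Set.disjoint_left]
  rintro b ⟨a, ha, hab⟩ ⟨c, hc, hcb⟩
  exact h a ha c hc ((hab.trans hcb.symm).mono (by omega))

theorem Separated.not_relMap {r : ℕ} {A C : Set B} (h : Separated L (2 * r + 1) A C)
    {n : ℕ} (R : L.Relations n) {t : Fin n → B} {i j : Fin n}
    (hi : t i ∈ ballAround L r A) (hj : t j ∈ ballAround L r C) :
    ¬ Structure.RelMap R t := by
  intro hR
  have hne : t i ≠ t j := fun hij => Set.disjoint_left.1 h.disjoint hi (hij ▸ hj)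
  have hadj : gaifmanAdj L B (t i) (t j) := ⟨hne, n, R, t, hR, ⟨i, rfl⟩, ⟨j, rfl⟩⟩
  obtain ⟨a, ha, hai⟩ := hi
  obtain ⟨c, hc, hcj⟩ := hj
  exact h a ha c hc (((hai.trans (hadj.distLE 0)).trans hcj.symm).mono (by omega))

/-- Local isomorphisms on sets that are far from each other can be glued. -/
theorem IsLocalIso.glue {r : ℕ} {A C : Set B} {e₁ e₂ : PartialEquiv B B}
    (h₁ : IsLocalIso L r A e₁) (h₂ : IsLocalIso L r C e₂)
    (hAC : Separated L (2 * r + 1) A C) (hAC' : Separated L (2 * r + 1) (e₁ '' A) (e₂ '' C)) :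
    ∃ e, IsLocalIso L r (A ∪ C) e ∧ EqOn e e₁ A ∧ EqOn e e₂ C := by
  classical
  obtain ⟨f₁, hf₁, hs₁, ht₁, heq₁⟩ := h₁.exists_exact
  obtain ⟨f₂, hf₂, hs₂, ht₂, heq₂⟩ := h₂.exists_exact
  have hs : Disjoint f₁.source f₂.source := by rw [hs₁, hs₂]; exact hAC.disjoint
  have ht : Disjoint f₁.target f₂.target := by rw [ht₁, ht₂]; exact hAC'.disjoint
  set e := f₁.disjointUnion f₂ hs ht with he
  have hsrc : e.source = f₁.source ∪ f₂.source := rfl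
  have htgt : e.target = f₁.target ∪ f₂.target := rfl
  have he₁ : EqOn e f₁ f₁.source := fun b hb => by
    simp [he, PartialEquiv.disjointUnion_eq_piecewise, hb]
  have he₂ : EqOn e f₂ f₂.source := fun b hb => by
    have : b ∉ f₁.source := fun hb' => Set.disjoint_left.1 hs hb' hb
    simp [he, PartialEquiv.disjointUnion_eq_piecewise, this]
  have hA : A ⊆ f₁.source := hs₁ ▸ subset_ballAround r A
  have hC : C ⊆ f₂.source := hs₂ ▸ subset_ballAround r C
  have heA : EqOn e e₁ A := fun a ha => (he₁ (hA ha)).trans (heq₁ ha)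
  have heC : EqOn e e₂ C := fun c hc => (he₂ (hC hc)).trans (heq₂ hc)
  refine ⟨e, ⟨fun n R t hmem => ?_, ?_, ?_⟩, heA, heC⟩
  · by_cases h1 : ∀ i, t i ∈ f₁.source
    · rw [show e ∘ t = f₁ ∘ t from funext fun i => he₁ (h1 i)]
      exact hf₁ n R t h1
    by_cases h2 : ∀ i, t i ∈ f₂.source
    · rw [show e ∘ t = f₂ ∘ t from funext fun i => he₂ (h2 i)]
      exact hf₂ n R t h2
    push Not at h1 h2
    obtain ⟨j, hj⟩ := h1
    obtain ⟨i, hi⟩ := h2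
    have hj := (hmem j).resolve_left hj
    have hi := (hmem i).resolve_right hi
    refine iff_of_false ?_ (hAC.not_relMap R (hs₁ ▸ hi) (hs₂ ▸ hj))
    refine hAC'.not_relMap R (i := i) (j := j) ?_ ?_
    · rw [← ht₁, Function.comp_apply, he₁ hi]
      exact f₁.map_source hi
    · rw [← ht₂, Function.comp_apply, he₂ hj]
      exact f₂.map_source hj
  · rw [hsrc, hs₁, hs₂, ballAround_union]
  · rw [htgt, ht₁, ht₂, image_union, ballAround_union, heA.image_eq, heC.image_eq]

/-- The radius of the neighbourhoods that determine formulas of quantifier rank `q`. -/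
def localityRadius : ℕ → ℕ
  | 0 => 0
  | q + 1 => 3 * localityRadius q + 1

theorem IsLocalIso.back {r : ℕ} {A : Set B} {e : PartialEquiv B B}
    (hfin : (ballAround L (2 * r + 1) A).Finite)
    (h : IsLocalIso L (3 * r + 1) A e) (c' : B) :
    ∃ (c : B) (e' : PartialEquiv B B), IsLocalIso L r (A ∪ {c}) e' ∧ EqOn e' e A ∧ e' c = c' := by
  have hA : IsLocalIso L r A e :=
    h.subset (ρ := 0) (by omega) (subset_ballAround 0 A)
  by_cases hc' : c' ∈ ballAround L (2 * r + 1) (e '' A)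
  · have htgt : c' ∈ e.target :=
      h.ballAround_subset_target (ballAround_mono (by omega) Subset.rfl hc')
    have hc : e.symm c' ∈ ballAround L (2 * r + 1) A := by
      have := h.symm.map_ballAround (by omega) hc'
      rwa [h.symm_image] at this
    refine ⟨e.symm c', e, h.subset (ρ := 2 * r + 1) (by omega) ?_, fun a _ => rfl,
      e.right_inv htgt⟩
    exact union_subset (subset_ballAround _ _) (singleton_subset_iff.2 hc)
  · obtain ⟨c, ⟨g, hg, hgc⟩, hc⟩ : ∃ c, (∃ g, IsLocalIso L r {c} g ∧ g c = c') ∧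
        c ∉ ballAround L (2 * r + 1) A := by
      by_contra! hcon
      set T : Set B := {c | ∃ g, IsLocalIso L r {c} g ∧ g c = c'} with hT
      have hTsub : T ⊆ ballAround L (2 * r + 1) A := fun c hc => hcon c hc
      have hmap : MapsTo e T T := by
        rintro c hc
        have hloc : IsLocalIso L r {c} e :=
          h.subset (ρ := 2 * r + 1) (by omega) (singleton_subset_iff.2 (hTsub hc))
        obtain ⟨g, hg, hgc⟩ := hc
        have hs := hloc.symm
        rw [image_singleton] at hs
        have hcc : e.symm (e c) = c := e.left_inv (hloc.subset_source rfl)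
        refine ⟨e.symm.trans g, hs.trans ?_, ?_⟩
        · rwa [image_singleton, hcc]
        · simp [hcc, hgc]
      have hinj : InjOn e T := e.injOn.mono
        (hTsub.trans ((ballAround_mono (by omega) Subset.rfl).trans h.ballAround_subset_source))
      have hsurj : SurjOn e T T :=
        ((hfin.subset hTsub).injOn_iff_bijOn_of_mapsTo hmap |>.1 hinj).surjOn
      have hc'T : c' ∈ T := ⟨_, IsLocalIso.refl r {c'}, rfl⟩
      obtain ⟨c, hc, rfl⟩ := hsurj hc'T
      exact hc' (h.map_ballAround (by omega) (hTsub hc))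
    obtain ⟨e', he', heA, hec⟩ := hA.glue hg
      (by rintro a ha _ rfl hac; exact hc ⟨a, ha, hac⟩)
      (by rw [image_singleton, hgc]; rintro a ha _ rfl hac; exact hc' ⟨a, ha, hac⟩)
    exact ⟨c, e', he', heA, (hec rfl).trans hgc⟩

theorem IsLocalIso.forth {r : ℕ} {A : Set B} {e : PartialEquiv B B}
    (hfin : (ballAround L (2 * r + 1) (e '' A)).Finite)
    (h : IsLocalIso L (3 * r + 1) A e) (c : B) :
    ∃ (c' : B) (e' : PartialEquiv B B), IsLocalIso L r (A ∪ {c}) e' ∧ EqOn e' e A ∧ e' c = c' := by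
  obtain ⟨c', e', he', heq, hc⟩ := h.symm.back hfin c
  refine ⟨c', e'.symm, ?_, fun a ha => ?_, ?_⟩
  · have := he'.symm
    rwa [image_union, image_singleton, hc, heq.image_eq, h.symm_image] at this
  · have hea : e' (e a) = a :=
      (heq (mem_image_of_mem e ha)).trans (e.left_inv (h.subset_source ha))
    calc e'.symm a = e'.symm (e' (e a)) := by rw [hea]
      _ = e a := e'.left_inv (he'.subset_source (Or.inl (mem_image_of_mem e ha)))
  · rw [← hc]
    exact e'.left_inv (he'.subset_source (Or.inr rfl))

theorem FirstOrder.Language.Term.realize_comp_of_isRelational [L.IsRelational] {α : Type*} (t : L.Term α)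
    (v : α → B) (e : B → B) : t.realize (e ∘ v) = e (t.realize v) := by
  cases t with
  | var => rfl
  | func f => exact isEmptyElim f

theorem FirstOrder.Language.Term.realize_mem_range_of_isRelational [L.IsRelational] {α : Type*} (t : L.Term α)
    (v : α → B) : t.realize v ∈ range v := by
  cases t with
  | var i => exact ⟨i, rfl⟩
  | func f => exact isEmptyElim f

/-- Within one locally finite structure, a local isomorphism of sufficiently large radius
preserves formulas of bounded quantifier rank. -/
theorem IsLocalIso.realize_iff [L.IsRelational] {α : Type*} [Finite α]
    (hfin : ∀ (r : ℕ) (A : Set B), A.Finite → (ballAround L r A).Finite)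
    {n : ℕ} (φ : L.BoundedFormula α n) :
    ∀ {q : ℕ}, qRank φ ≤ q → ∀ (v : α → B) (xs : Fin n → B) (e : PartialEquiv B B),
      IsLocalIso L (localityRadius q) (range v ∪ range xs) e →
      (φ.Realize (e ∘ v) (e ∘ xs) ↔ φ.Realize v xs) := by
  induction φ with
  | falsum => intros; rfl
  | equal t₁ t₂ =>
    intro q _ v xs e h
    have hmem : ∀ t : L.Term _, t.realize (Sum.elim v xs) ∈ e.source := fun t =>
      h.subset_source (Sum.elim_range v xs ▸ Term.realize_mem_range_of_isRelational t _)
    simp only [BoundedFormula.Realize, ← Sum.comp_elim, Term.realize_comp_of_isRelational]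
    exact e.injOn.eq_iff (hmem t₁) (hmem t₂)
  | rel R ts =>
    intro q _ v xs e h
    have hmem : ∀ t : L.Term _, t.realize (Sum.elim v xs) ∈ e.source := fun t =>
      h.subset_source (Sum.elim_range v xs ▸ Term.realize_mem_range_of_isRelational t _)
    simp only [BoundedFormula.Realize, ← Sum.comp_elim, Term.realize_comp_of_isRelational]
    exact h.isPartialIso _ R _ fun i => hmem (ts i)
  | imp f g ihf ihg =>
    intro q hq v xs e h
    simp only [qRank, max_le_iff] at hq
    simp only [BoundedFormula.realize_imp, ihf hq.1 v xs e h, ihg hq.2 v xs e h]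
  | @all n f ih =>
    intro q hq v xs e h
    obtain ⟨q, rfl⟩ : ∃ p, q = p + 1 := ⟨q - 1, by simp only [qRank] at hq; omega⟩
    have hq' : qRank f ≤ q := by simp only [qRank] at hq; omega
    have hAfin : (range v ∪ range xs).Finite := (finite_range v).union (finite_range xs)
    have key : ∀ (c : B) (e' : PartialEquiv B B),
        IsLocalIso L (localityRadius q) (range v ∪ range xs ∪ {c}) e' →
        EqOn e' e (range v ∪ range xs) →
        (f.Realize (e ∘ v) (Fin.snoc (e ∘ xs) (e' c)) ↔ f.Realize v (Fin.snoc xs c)) := by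
      intro c e' he' heq
      have h1 : e ∘ v = e' ∘ v := funext fun i => (heq (Or.inl ⟨i, rfl⟩)).symm
      have h2 : (Fin.snoc (e ∘ xs) (e' c) : Fin (n + 1) → B) = e' ∘ Fin.snoc xs c := by
        rw [Fin.comp_snoc]
        congr 1
        exact funext fun i => (heq (Or.inr ⟨i, rfl⟩)).symm
      rw [h1, h2]
      apply ih hq'
      convert he' using 1
      rw [Fin.range_snoc, insert_eq, union_assoc, union_comm {c}]
    simp only [BoundedFormula.realize_all]
    constructor
    · intro H c
      obtain ⟨c', e', he', heq, -⟩ := IsLocalIso.forth (hfin _ _ (hAfin.image e)) h c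
      exact (key c e' he' heq).1 (H _)
    · intro H c'
      obtain ⟨c, e', he', heq, rfl⟩ := IsLocalIso.back (hfin _ _ hAfin) h c'
      exact (key c e' he' heq).2 (H c)

variable (L) in
/-- Codes for isomorphism types of pointed structures with at most `N + 1` elements. -/
abbrev NbhdCode (ι : Type*) (N : ℕ) :=
  Set (Fin (N + 1)) × ((R : Σ n, L.Relations n) → (Fin R.1 → Fin (N + 1)) → Prop) ×
    (ι → Fin (N + 1))

theorem exists_nbhdCode [Nonempty B] {ι : Type*} (r N : ℕ) (a : ι → B)
    (hfin : (ballAround L r (range a)).Finite) (hN : (ballAround L r (range a)).ncard ≤ N) :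
    ∃ (c : NbhdCode L ι N) (f : PartialEquiv B (Fin (N + 1))),
      f.source = ballAround L r (range a) ∧ f.target = c.1 ∧
      (∀ (n : ℕ) (R : L.Relations n) (t : Fin n → B), (∀ i, t i ∈ f.source) →
        (c.2.1 ⟨n, R⟩ (f ∘ t) ↔ Structure.RelMap R t)) ∧ f ∘ a = c.2.2 := by
  set S := ballAround L r (range a) with hS
  obtain ⟨f, hf⟩ : ∃ f : B → Fin (N + 1), InjOn f S := by
    classical
    have := hfin.fintype
    have hcard : Fintype.card S ≤ Fintype.card (Fin (N + 1)) := by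
      rw [Fintype.card_fin, ← Nat.card_eq_fintype_card, Nat.card_coe_set_eq]; omega
    obtain ⟨g⟩ := Function.Embedding.nonempty_of_card_le hcard
    refine ⟨fun b => if h : b ∈ S then g ⟨b, h⟩ else 0, fun x hx y hy hxy => ?_⟩
    simpa [hx, hy] using hxy
  refine ⟨⟨f '' S, fun R t => ∃ t', (∀ i, t' i ∈ S) ∧ f ∘ t' = t ∧ Structure.RelMap R.2 t', f ∘ a⟩,
    hf.toPartialEquiv f S, rfl, rfl, fun n R t ht => ⟨?_, fun h => ⟨t, ht, rfl, h⟩⟩, rfl⟩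
  rintro ⟨t', ht', heq, hR⟩
  have : t' = t := funext fun i => hf (ht' i) (ht i) (congrFun heq i)
  exact this ▸ hR

/-- Tuples with small `r`-neighbourhoods can be coded by finitely many codes such that tuples
with the same code have isomorphic neighbourhoods. -/
theorem exists_nbhdCode_map [Nonempty B] {ι : Type*} (r N : ℕ)
    (hfin : ∀ a : ι → B, (ballAround L r (range a)).Finite)
    (hN : ∀ a : ι → B, (ballAround L r (range a)).ncard ≤ N) :
    ∃ code : (ι → B) → NbhdCode L ι N, ∀ a b, code a = code b →
      ∃ e, IsLocalIso L r (range a) e ∧ e ∘ a = b := by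
  choose code f hsrc htgt hrel hpt using fun a : ι → B =>
    exists_nbhdCode (L := L) r N a (hfin a) (hN a)
  refine ⟨code, fun a b hab => ?_⟩
  have htt : (f a).target = (f b).target := by rw [htgt, htgt, hab]
  have ha : ∀ i, a i ∈ (f a).source := fun i => hsrc a ▸ subset_ballAround r _ ⟨i, rfl⟩
  have hb : ∀ i, b i ∈ (f b).source := fun i => hsrc b ▸ subset_ballAround r _ ⟨i, rfl⟩
  have hs : ((f a).trans (f b).symm).source = ballAround L r (range a) := by
    rw [PartialEquiv.trans_source, ← hsrc a, PartialEquiv.symm_source, ← htt]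
    exact inter_eq_left.2 fun x hx => (f a).map_source hx
  have ht : ((f a).trans (f b).symm).target = ballAround L r (range b) := by
    rw [PartialEquiv.trans_target, ← hsrc b, PartialEquiv.symm_target, htt]
    exact inter_eq_left.2 fun x hx => (f b).map_source hx
  have hcomp : (f a).trans (f b).symm ∘ a = b := by
    funext i
    have : f a (a i) = f b (b i) := by
      rw [← Function.comp_apply (f := f a), ← Function.comp_apply (f := f b), hpt, hpt, hab]
    simp [this, (f b).left_inv (hb i)]
  refine ⟨(f a).trans (f b).symm, ⟨fun n R t htt' => ?_, hs.ge, ?_⟩, hcomp⟩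
  · have hta : ∀ i, t i ∈ (f a).source := fun i => (htt' i).1
    have htb : ∀ i, ((f a).trans (f b).symm) (t i) ∈ (f b).source := fun i => by
      rw [hsrc, ← ht]; exact PartialEquiv.map_source _ (htt' i)
    rw [← hrel b n R ((f a).trans (f b).symm ∘ t) htb, ← hrel a n R t hta, hab]
    refine iff_of_eq (congrArg _ (funext fun i => ?_))
    exact (f b).right_inv (htt ▸ (f a).map_source (hta i))
  · rw [← range_comp, hcomp, ht]

/-- The entries of a tuple split into those that are close to `A` and those that are far from
`A` and from all close entries. -/
theorem exists_separated_split {ℓ : ℕ} (s : ℕ) (A : Set B) (p : Fin ℓ → B) :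
    ∃ J : Set (Fin ℓ), p '' J ⊆ ballAround L ((ℓ + 1) * s) A ∧
      Separated L s (A ∪ p '' J) (p '' Jᶜ) := by
  have h : ∀ n, ∃ J : Finset (Fin ℓ), p '' (J : Set (Fin ℓ)) ⊆ ballAround L (n * s) A ∧
      (Separated L s (A ∪ p '' J) (p '' (J : Set (Fin ℓ))ᶜ) ∨ n ≤ J.card) := by
    classical
    intro n
    induction n with
    | zero => exact ⟨∅, by simp, Or.inr (Nat.zero_le _)⟩
    | succ n ih =>
      obtain ⟨J, hJ, hor⟩ := ih
      by_cases hsep : Separated L s (A ∪ p '' J) (p '' (J : Set (Fin ℓ))ᶜ)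
      · exact ⟨J, hJ.trans (ballAround_mono (Nat.mul_le_mul_right _ n.le_succ) Subset.rfl),
          Or.inl hsep⟩
      have hcard := hor.resolve_left hsep
      simp only [Separated, not_forall, not_not] at hsep
      obtain ⟨a, ha, _, ⟨j, hj, rfl⟩, haj⟩ := hsep
      have ha' : a ∈ ballAround L (n * s) A :=
        ha.elim (fun h => subset_ballAround _ _ h) fun h => hJ h
      refine ⟨insert j J, ?_, Or.inr ?_⟩
      · rw [Finset.coe_insert, image_insert_eq, insert_subset_iff, Nat.succ_mul]
        exact ⟨ballAround_ballAround_subset _ _ _ ⟨a, ha', haj⟩,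
          hJ.trans (ballAround_mono (Nat.le_add_right _ _) Subset.rfl)⟩
      · rw [Finset.card_insert_of_notMem hj]
        omega
  obtain ⟨J, hJ, hor⟩ := h (ℓ + 1)
  refine ⟨J, hJ, hor.resolve_right fun hle => ?_⟩
  have := hle.trans (Finset.card_le_univ J)
  simp at this

/-- Changing the far entries of a parameter tuple within their local isomorphism type does not
change the local isomorphism type of the tuple together with elements of `A`. -/
theorem IsLocalIso.exists_append {r k ℓ : ℕ} {A : Set B} {p p' : Fin ℓ → B} {J : Set (Fin ℓ)}
    {e : PartialEquiv B B} (he : IsLocalIso L r (range p) e) (hep : e ∘ p = p')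
    (hJ : ∀ j ∈ J, p j = p' j)
    (hsep : Separated L (2 * r + 1) (A ∪ p '' J) (p '' Jᶜ))
    (hsep' : Separated L (2 * r + 1) (A ∪ p' '' J) (p' '' Jᶜ))
    (x : Fin k → B) (hx : ∀ i, x i ∈ A) :
    ∃ e', IsLocalIso L r (range (Fin.append x p)) e' ∧
      e' ∘ Fin.append x p = Fin.append x p' := by
  have himg : e '' (p '' Jᶜ) = p' '' Jᶜ := by rw [← image_comp, hep]
  have hJ' : p '' J = p' '' J := image_congr hJ
  obtain ⟨g, hg, hg₁, hg₂⟩ := (IsLocalIso.refl (L := L) r (A ∪ p '' J)).glue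
    (he.mono (image_subset_range p Jᶜ)) hsep
    (by rw [himg, PartialEquiv.refl_coe, image_id, hJ']; exact hsep')
  refine ⟨g, hg.mono ?_, ?_⟩
  · rintro _ ⟨i, rfl⟩
    refine Fin.addCases (fun i => ?_) (fun j => ?_) i
    · rw [Fin.append_left]; exact Or.inl (Or.inl (hx i))
    · rw [Fin.append_right]
      by_cases hj : j ∈ J
      · exact Or.inl (Or.inr ⟨j, hj, rfl⟩)
      · exact Or.inr ⟨j, hj, rfl⟩
  · funext i
    refine Fin.addCases (fun i => ?_) (fun j => ?_) i
    · simp only [Function.comp_apply, Fin.append_left]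
      exact hg₁ (Or.inl (hx i))
    · simp only [Function.comp_apply, Fin.append_right]
      by_cases hj : j ∈ J
      · rw [hg₁ (Or.inr ⟨j, hj, rfl⟩), ← hJ j hj]
        rfl
      · rw [hg₂ ⟨j, hj, rfl⟩, ← hep]
        rfl

end LocalIsomorphism

section Counting

open Set Filter

theorem exists_mul_pow_lt_two_pow (K C ℓ : ℕ) : ∃ M : ℕ, K * (M * C + 1) ^ ℓ < 2 ^ M := by
  have h : Tendsto (fun n : ℕ => (n : ℝ) ^ ℓ / 2 ^ n) atTop (nhds 0) :=
    tendsto_pow_const_div_const_pow_of_one_lt ℓ one_lt_two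
  have hpos : (0 : ℝ) < 1 / (K * (C + 1) ^ ℓ + 1) := by positivity
  obtain ⟨M, hM, hM1⟩ := ((h.eventually_lt_const hpos).and (eventually_ge_atTop 1)).exists
  refine ⟨M, ?_⟩
  have hle : K * (M * C + 1) ^ ℓ ≤ (K * (C + 1) ^ ℓ + 1) * M ^ ℓ := by
    calc K * (M * C + 1) ^ ℓ ≤ K * (M * (C + 1)) ^ ℓ := by gcongr; nlinarith
      _ = K * (C + 1) ^ ℓ * M ^ ℓ := by rw [mul_pow]; ring
      _ ≤ _ := by gcongr; omega
  refine hle.trans_lt ?_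
  rw [div_lt_div_iff₀ (by positivity) (by positivity)] at hM
  have : ((K * (C + 1) ^ ℓ + 1) * M ^ ℓ : ℝ) < 2 ^ M := by linarith
  exact_mod_cast this

variable {L : FirstOrder.Language} [L.IsRelational] [Finite L.Symbols] {B : Type w} [L.Structure B]

instance finite_sigma_relations : Finite (Σ n, L.Relations n) :=
  Finite.of_injective (Sum.inr : _ → L.Symbols) Sum.inr_injective

/-- A shattered set of size `M` yields at least `2 ^ M` traces, but traces are determined by
the entries of the parameter tuple near the set and boundedly many further data. -/
theorem two_pow_le_of_shattered [Nonempty B] {d k ℓ q : ℕ}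
    (hd : ∀ a : B, {b | gaifmanAdj L B a b}.Finite ∧ Set.ncard {b | gaifmanAdj L B a b} ≤ d)
    (V : Finset (Fin k → B))
    (hV : ∀ W ⊆ (V : Set (Fin k → B)), ∃ (φ : L.Formula (Fin (k + ℓ))) (p : Fin ℓ → B),
      qRank φ ≤ q ∧ ∀ x ∈ V, (φ.Realize (Fin.append x p) ↔ x ∈ W)) :
    2 ^ V.card ≤
      Nat.card (NbhdCode L (Fin ℓ) (ℓ * ballBound d (localityRadius q)) ×
        Set (NbhdCode L (Fin (k + ℓ)) ((k + ℓ) * ballBound d (localityRadius q)))) *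
      (V.card * (k * ballBound d ((ℓ + 1) * (2 * localityRadius q + 1))) + 1) ^ ℓ := by
  set r := localityRadius q
  have hfin : ∀ (r : ℕ) (A : Set B), A.Finite → (ballAround L r A).Finite :=
    fun r A hA => (ballAround_finite_and_ncard_le hd r hA).1
  have hrange : ∀ {n : ℕ} (a : Fin n → B), (range a).ncard ≤ n := fun {n} a => by
    simpa using ncard_image_le (f := a) (s := univ)
  have hN : ∀ (n : ℕ) (a : Fin n → B),
      (ballAround L r (range a)).ncard ≤ n * ballBound d r := fun n a =>
    (ballAround_finite_and_ncard_le hd r (finite_range a)).2.trans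
      (Nat.mul_le_mul_right _ (hrange a))
  obtain ⟨code₁, hcode₁⟩ := exists_nbhdCode_map (L := L) r _
    (fun a : Fin ℓ → B => hfin r _ (finite_range a)) (hN ℓ)
  obtain ⟨code₂, hcode₂⟩ := exists_nbhdCode_map (L := L) r _
    (fun a : Fin (k + ℓ) → B => hfin r _ (finite_range a)) (hN (k + ℓ))
  have hreal : ∀ (φ : L.Formula (Fin (k + ℓ))), qRank φ ≤ q → ∀ a b : Fin (k + ℓ) → B,
      (∃ e, IsLocalIso L r (range a) e ∧ e ∘ a = b) → (φ.Realize b ↔ φ.Realize a) := by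
    rintro φ hφ a _ ⟨e, he, rfl⟩
    have hxs : (e ∘ (default : Fin 0 → B)) = default := Subsingleton.elim _ _
    have := IsLocalIso.realize_iff hfin φ hφ a default e (by simpa using he)
    rwa [hxs] at this
  set A : Set B := ⋃ x ∈ V, range x
  have hAfin : A.Finite := V.finite_toSet.biUnion fun x _ => finite_range x
  have hAcard : A.ncard ≤ V.card * k :=
    (Finset.set_ncard_biUnion_le _ _).trans
      ((Finset.sum_le_sum fun x _ => hrange x).trans (by simp))
  set N : Set B := ballAround L ((ℓ + 1) * (2 * r + 1)) A
  have hNfin : N.Finite := hfin _ _ hAfin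
  have : Finite N := hNfin
  have hNcard : Nat.card N ≤ V.card * (k * ballBound d ((ℓ + 1) * (2 * r + 1))) := by
    rw [Nat.card_coe_set_eq, ← mul_assoc]
    exact (ballAround_finite_and_ncard_le hd _ hAfin).2.trans (Nat.mul_le_mul_right _ hAcard)
  choose J hJ hsep using exists_separated_split (L := L) (B := B) (ℓ := ℓ) (2 * r + 1) A
  choose φ p hφ hreal' using fun W : Set V => hV (Subtype.val '' W)
    (by rintro _ ⟨x, _, rfl⟩; exact x.2)
  have hmem : ∀ (W : Set V) (x : V),
      ((φ W).Realize (Fin.append x.1 (p W)) ↔ x ∈ W) := fun W x => by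
    rw [hreal' W x.1 x.2]; simp
  classical
  let near : Set V → Fin ℓ → Option N := fun W j =>
    if h : j ∈ J (p W) then some ⟨p W j, hJ _ ⟨j, h, rfl⟩⟩ else none
  let sat : Set V → Set (NbhdCode L (Fin (k + ℓ)) ((k + ℓ) * ballBound d r)) := fun W =>
    {c | ∃ x ∈ W, code₂ (Fin.append x.1 (p W)) = c}
  let key : Set V → (NbhdCode L (Fin ℓ) (ℓ * ballBound d r) ×
      Set (NbhdCode L (Fin (k + ℓ)) ((k + ℓ) * ballBound d r))) × (Fin ℓ → Option N) :=
    fun W => ((code₁ (p W), sat W), near W)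
  have hsub : ∀ W W', key W = key W' → W ⊆ W' := by
    intro W W' h x hxW
    simp only [key, Prod.mk.injEq] at h
    obtain ⟨⟨hc, hs⟩, hn⟩ := h
    have hnear : ∀ j, near W j = near W' j := congrFun hn
    have hJJ : J (p W) = J (p W') := by
      ext j
      have := hnear j
      by_cases h1 : j ∈ J (p W) <;> by_cases h2 : j ∈ J (p W') <;> simp [near, h1, h2] at this ⊢
    have hpp : ∀ j ∈ J (p W'), p W' j = p W j := by
      intro j hj
      have := hnear j
      simp only [near, hJJ, hj, dite_true, Option.some.injEq, Subtype.mk.injEq] at this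
      exact this.symm
    obtain ⟨e, he, hep⟩ := hcode₁ _ _ hc.symm
    have hx : ∀ i, x.1 i ∈ A := fun i => mem_biUnion x.2 ⟨i, rfl⟩
    have hiso := he.exists_append hep hpp (hsep _) (hJJ ▸ hsep (p W)) x.1 hx
    obtain ⟨y, hyW', hy⟩ : code₂ (Fin.append x.1 (p W)) ∈ sat W' := hs ▸ ⟨x, hxW, rfl⟩
    have h1 := (hmem W' y).2 hyW'
    rw [← hreal _ (hφ W') _ _ (hcode₂ _ _ hy), hreal _ (hφ W') _ _ hiso] at h1
    exact (hmem W' x).1 h1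
  have hinj : Function.Injective key := fun W W' h =>
    (hsub W W' h).antisymm (hsub W' W h.symm)
  have hcard := Nat.card_le_card_of_injective key hinj
  rw [Nat.card_prod, Nat.card_fun, Finite.card_option, Nat.card_fin] at hcard
  calc 2 ^ V.card = Nat.card (Set V) := by simp
    _ ≤ _ := hcard
    _ ≤ _ := by gcongr

end Counting

/-- Lemma 5.3, Grohe–Turán: for all `d, k, ℓ, q` there is an `m` such that for
every structure `B` of maximum Gaifman degree at most `d`, the family of concepts
`⟦φ(x̄; v̄)⟧^B ⊆ U(B)^k` (with `qr(φ) ≤ q`, `|x̄| = k`, `|ȳ| = ℓ`, `v̄ ∈ U(B)^ℓ`) has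
VC-dimension at most `m`: every set shattered by the family is finite of size at most `m`. -/
theorem statement_14 {L : FirstOrder.Language} [L.IsRelational] [Finite L.Symbols]
    (dg k ℓ q : ℕ) :
    ∃ m : ℕ, ∀ (B : Type w) [L.Structure B],
      (∀ a : B, {b | gaifmanAdj L B a b}.Finite ∧ Set.ncard {b | gaifmanAdj L B a b} ≤ dg) →
      ∀ V : Set (Fin k → B),
        (∀ W ⊆ V, ∃ (φ : L.Formula (Fin (k + ℓ))) (p : Fin ℓ → B), qRank φ ≤ q ∧
          ∀ x ∈ V, (φ.Realize (Fin.append x p) ↔ x ∈ W)) →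
        V.Finite ∧ V.ncard ≤ m := by
  obtain ⟨M, hM⟩ := exists_mul_pow_lt_two_pow
    (Nat.card (NbhdCode L (Fin ℓ) (ℓ * ballBound dg (localityRadius q)) ×
      Set (NbhdCode L (Fin (k + ℓ)) ((k + ℓ) * ballBound dg (localityRadius q)))))
    (k * ballBound dg ((ℓ + 1) * (2 * localityRadius q + 1))) ℓ
  refine ⟨M + 1, fun B _ hd V hV => ?_⟩
  rcases isEmpty_or_nonempty B with hB | hB
  · have hsub : V.Subsingleton := fun x _ y _ => Subsingleton.elim x y
    exact ⟨hsub.finite, (Set.ncard_le_one_of_subsingleton V).trans (by omega)⟩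
  by_contra hcon
  obtain ⟨V', hV'V, hV'card⟩ : ∃ V' : Finset (Fin k → B), (V' : Set _) ⊆ V ∧ V'.card = M := by
    by_cases hfin : V.Finite
    · have hlt : M ≤ hfin.toFinset.card := by
        rw [← Set.ncard_eq_toFinset_card V hfin]
        by_contra hlt
        exact hcon ⟨hfin, by omega⟩
      obtain ⟨V', hsub, hcard⟩ := Finset.exists_subset_card_eq hlt
      exact ⟨V', fun x hx => hfin.mem_toFinset.1 (hsub hx), hcard⟩
    · exact Set.Infinite.exists_subset_card_eq hfin M
  have hle := two_pow_le_of_shattered hd V' fun W hW => by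
    obtain ⟨φ, p, hφ, h⟩ := hV W (hW.trans hV'V)
    exact ⟨φ, p, hφ, fun x hx => h x (hV'V hx)⟩
  rw [hV'card] at hle
  exact absurd hM (not_lt.2 hle)
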